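/- Let n ≥ 1, s ∈ (0,1) with n ≤ 2s (so n = 1 and s ≥ 1/2), and let K be an admissible kernel. Then for every q > 1, every nonnegative weak supersolution u of L_K u = u^q in ℝⁿ satisfies u = 0 almost everywhere in ℝⁿ. -/

import Mathlib

open MeasureTheory Metric

noncomputable section

abbrev Euc (n : ℕ) := EuclideanSpace ℝ (Fin n)

def IsAdmissibleKernel (n : ℕ) (s lam Lam : ℝ) (K : Euc n → ℝ) : Prop :=
  0 < lam ∧ lam ≤ Lam ∧ Measurable K ∧
  (∀ z : Euc n, z ≠ 0 → K z = K (-z)) ∧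
  (∀ z : Euc n, z ≠ 0 →
    lam * ‖z‖ ^ (-(n : ℝ) - 2 * s) ≤ K z ∧ K z ≤ Lam * ‖z‖ ^ (-(n : ℝ) - 2 * s))

def LK (n : ℕ) (K φ : Euc n → ℝ) (x : Euc n) : ℝ :=
  (1 / 2) * ∫ z : Euc n, (2 * φ x - φ (x + z) - φ (x - z)) * K z

def IsTestFun (n : ℕ) (φ : Euc n → ℝ) : Prop :=
  ContDiff ℝ (⊤ : ℕ∞) φ ∧ HasCompactSupport φ

def MemL1Tail (n : ℕ) (s : ℝ) (u : Euc n → ℝ) : Prop :=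
  LocallyIntegrable u volume ∧
  Integrable (fun x : Euc n => |u x| * (1 + ‖x‖) ^ (-(n : ℝ) - 2 * s)) volume

def MemLqLoc (n : ℕ) (q : ℝ) (u : Euc n → ℝ) : Prop :=
  ∀ R : ℝ, 0 < R → IntegrableOn (fun x : Euc n => u x ^ q) (ball (0 : Euc n) R) volume

def IsWeakSupersol (n : ℕ) (s q : ℝ) (K u : Euc n → ℝ) : Prop :=
  Measurable u ∧ (∀ x, 0 ≤ u x) ∧ MemLqLoc n q u ∧ MemL1Tail n s u ∧
  ∀ φ : Euc n → ℝ, IsTestFun n φ → (∀ x, 0 ≤ φ x) →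
    (∫ x : Euc n, u x ^ q * φ x) ≤ ∫ x : Euc n, u x * LK n K φ x

def IsCutoff (n : ℕ) (η : Euc n → ℝ) : Prop :=
  ContDiff ℝ (⊤ : ℕ∞) η ∧ (∀ x, 0 ≤ η x ∧ η x ≤ 1) ∧
  (∀ x : Euc n, ‖x‖ ≤ 1 → η x = 1) ∧ (∀ x : Euc n, 2 ≤ ‖x‖ → η x = 0)

def cutoffSq (n : ℕ) (η : Euc n → ℝ) (R : ℝ) : Euc n → ℝ :=
  fun x => (η (R⁻¹ • x)) ^ 2

/-!
Test the inequality with `e ^ (m + 1)`, where `e = η (· / R)` is a rescaled cutoff function.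
Convexity of `t ↦ t ^ (m + 1)` and scaling give `L_K (e ^ (m + 1)) ≤ A R ^ (-2s) e ^ m`, and for `m`
so large that `m + 1 ≤ m q` Young's inequality with the conjugate exponent `p` of `q` absorbs
`A R ^ (-2s) ∫ u e ^ m` into `∫ u ^ q e ^ (m + 1)`. What remains is the bound `C R ^ (n - 2 s p)`
for the integral of `u ^ q` over the ball of radius `R`. The exponent is negative exactly when
`(n - 2s) q < n`, and then `R → ∞` forces `u = 0` almost everywhere.
-/

open Set Filter Topology Module

section LevyWeight

variable {E : Type*} [NormedAddCommGroup E] [NormedSpace ℝ E]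

/-- The weight `min (1, |z|²) |z| ^ (-d - 2s)`, `d = dim E`, against which second differences are
measured when they are integrated with respect to a kernel of order `2s`. -/
def levyWeight (s : ℝ) (z : E) : ℝ :=
  min 1 (‖z‖ ^ 2) * ‖z‖ ^ (-(finrank ℝ E : ℝ) - 2 * s)

lemma levyWeight_zero (s : ℝ) : levyWeight s (0 : E) = 0 := by
  simp [levyWeight]

lemma min_one_sq_norm_inv_smul_mul_rpow (s : ℝ) {R : ℝ} (hR : 0 < R) (z : E) :
    min 1 (‖R⁻¹ • z‖ ^ 2) * ‖z‖ ^ (-(finrank ℝ E : ℝ) - 2 * s) =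
      R ^ (-(finrank ℝ E : ℝ) - 2 * s) * levyWeight s (R⁻¹ • z) := by
  have hz : ‖z‖ = R * ‖R⁻¹ • z‖ := by
    rw [norm_smul_of_nonneg (inv_nonneg.2 hR.le), mul_inv_cancel_left₀ hR.ne']
  rw [levyWeight, hz, Real.mul_rpow hR.le (norm_nonneg _)]
  ring

lemma integrableOn_Ioi_min_one_sq_mul_rpow {s : ℝ} (hs : s ∈ Ioo (0 : ℝ) 1) :
    IntegrableOn (fun r : ℝ => min 1 (r ^ 2) * r ^ (-1 - 2 * s)) (Ioi 0) := by
  rw [← Ioc_union_Ioi_eq_Ioi zero_le_one, integrableOn_union]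
  constructor
  · have hnear : IntegrableOn (fun r : ℝ => r ^ (1 - 2 * s)) (Ioc 0 1) :=
      (intervalIntegral.intervalIntegrable_rpow' (by linarith [hs.2])).1
    refine hnear.congr_fun (fun r hr => ?_) measurableSet_Ioc
    dsimp only
    rw [min_eq_right (pow_le_one₀ hr.1.le hr.2), ← Real.rpow_natCast, ← Real.rpow_add hr.1]
    push_cast
    ring_nf
  · have hfar : IntegrableOn (fun r : ℝ => r ^ (-1 - 2 * s)) (Ioi 1) :=
      integrableOn_Ioi_rpow_of_lt (by linarith [hs.1]) one_pos
    refine hfar.congr_fun (fun r hr => ?_) measurableSet_Ioi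
    dsimp only
    rw [min_eq_left (one_le_pow₀ (le_of_lt hr)), one_mul]

variable [FiniteDimensional ℝ E] [MeasurableSpace E] [BorelSpace E]
  (μ : Measure E) [μ.IsAddHaarMeasure]

lemma integrable_levyWeight {s : ℝ} (hs : s ∈ Ioo (0 : ℝ) 1) :
    Integrable (levyWeight s : E → ℝ) μ := by
  cases subsingleton_or_nontrivial E
  · have hzero : (levyWeight s : E → ℝ) = 0 :=
      funext fun z => by rw [Subsingleton.elim z 0, levyWeight_zero, Pi.zero_apply]
    exact hzero ▸ integrable_zero E ℝ μ
  · refine (integrable_fun_norm_addHaar μ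
      (f := fun r : ℝ => min 1 (r ^ 2) * r ^ (-(finrank ℝ E : ℝ) - 2 * s))).2 <|
      (integrableOn_Ioi_min_one_sq_mul_rpow hs).congr_fun (fun r hr => ?_) measurableSet_Ioi
    have hradial : r ^ (-1 - 2 * s) =
        r ^ (finrank ℝ E - 1) * r ^ (-(finrank ℝ E : ℝ) - 2 * s) := by
      rw [← Real.rpow_natCast, ← Real.rpow_add hr, Nat.cast_pred finrank_pos]
      ring_nf
    simp only [hradial, smul_eq_mul]
    ring

lemma integral_rpow_mul_levyWeight_inv_smul (s : ℝ) {R : ℝ} (hR : 0 < R) :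
    ∫ z, R ^ (-(finrank ℝ E : ℝ) - 2 * s) * levyWeight s (R⁻¹ • z) ∂μ =
      R ^ (-(2 * s)) * ∫ z, levyWeight s z ∂μ := by
  rw [integral_const_mul, Measure.integral_comp_inv_smul_of_nonneg μ _ hR.le, smul_eq_mul,
    ← mul_assoc, ← Real.rpow_natCast, ← Real.rpow_add hR]
  ring_nf

end LevyWeight

section SecondDifference

variable {E F : Type*} [NormedAddCommGroup E] [NormedAddCommGroup F] [NormedSpace ℝ F] {φ : E → F}

lemma norm_secondDiff_le_of_norm_le {B : ℝ} (hB : ∀ y, ‖φ y‖ ≤ B) (x z : E) :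
    ‖(2 : ℝ) • φ x - φ (x + z) - φ (x - z)‖ ≤ 4 * B := by
  have htwo : ‖(2 : ℝ) • φ x‖ ≤ 2 * B := by
    rw [norm_smul, Real.norm_ofNat]; gcongr; exact hB x
  linarith [norm_sub_le ((2 : ℝ) • φ x - φ (x + z)) (φ (x - z)),
    norm_sub_le ((2 : ℝ) • φ x) (φ (x + z)), hB (x + z), hB (x - z)]

variable [NormedSpace ℝ E]

lemma norm_sub_sub_fderiv_le_of_lipschitzWith {C : NNReal} (hφ : Differentiable ℝ φ)
    (hC : LipschitzWith C (fderiv ℝ φ)) (x z : E) :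
    ‖φ (x + z) - φ x - fderiv ℝ φ x z‖ ≤ C * ‖z‖ ^ 2 := by
  have hderiv : ∀ y ∈ closedBall x ‖z‖, ‖fderiv ℝ φ y - fderiv ℝ φ x‖ ≤ C * ‖z‖ := fun y hy =>
    (hC.norm_sub_le y x).trans <| by gcongr; exact mem_closedBall_iff_norm.1 hy
  simpa [sq, mul_assoc] using
    (convex_closedBall x ‖z‖).norm_image_sub_le_of_norm_fderiv_le' (fun y _ => hφ y) hderiv
      (mem_closedBall_self (norm_nonneg z)) (show x + z ∈ closedBall x ‖z‖ by simp)

lemma norm_secondDiff_le_of_lipschitzWith {C : NNReal} (hφ : Differentiable ℝ φ)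
    (hC : LipschitzWith C (fderiv ℝ φ)) (x z : E) :
    ‖(2 : ℝ) • φ x - φ (x + z) - φ (x - z)‖ ≤ 2 * C * ‖z‖ ^ 2 := by
  have hforward := norm_sub_sub_fderiv_le_of_lipschitzWith hφ hC x z
  have hbackward := norm_sub_sub_fderiv_le_of_lipschitzWith hφ hC x (-z)
  rw [norm_neg, map_neg, ← sub_eq_add_neg] at hbackward
  have hsplit : (2 : ℝ) • φ x - φ (x + z) - φ (x - z) =
      -((φ (x + z) - φ x - fderiv ℝ φ x z) + (φ (x - z) - φ x - -fderiv ℝ φ x z)) := by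
    module
  rw [hsplit, norm_neg]
  linarith [norm_add_le (φ (x + z) - φ x - fderiv ℝ φ x z) (φ (x - z) - φ x - -fderiv ℝ φ x z)]

lemma exists_norm_secondDiff_le (hφ : ContDiff ℝ 2 φ) (hsupp : HasCompactSupport φ) :
    ∃ C, ∀ x z, ‖(2 : ℝ) • φ x - φ (x + z) - φ (x - z)‖ ≤ C * min 1 (‖z‖ ^ 2) := by
  obtain ⟨B, hB⟩ := hsupp.exists_bound_of_continuous hφ.continuous
  have hderiv : ContDiff ℝ 1 (fderiv ℝ φ) := hφ.fderiv_right (by norm_num)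
  obtain ⟨L, hL⟩ := hderiv.lipschitzWith_of_hasCompactSupport (hsupp.fderiv ℝ) one_ne_zero
  have hB0 : 0 ≤ B := (norm_nonneg (φ 0)).trans (hB 0)
  refine ⟨max (4 * B) (2 * L), fun x z => ?_⟩
  rw [mul_min_of_nonneg _ _ (by positivity), mul_one]
  exact le_min ((norm_secondDiff_le_of_norm_le hB x z).trans (le_max_left _ _))
    ((norm_secondDiff_le_of_lipschitzWith (hφ.differentiable (by norm_num)) hL x z).trans
      (by gcongr; exact le_max_right _ _))

end SecondDifference

section Operator

variable {n : ℕ} {s lam Lam : ℝ} {K φ : Euc n → ℝ}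

/-- A measurable kernel lying between `0` and `Lam |z| ^ (-n - 2s)`. This is `IsAdmissibleKernel`
without symmetry and with ellipticity from above only, so that degenerate kernels are allowed. -/
structure IsDominatedKernel (n : ℕ) (s Lam : ℝ) (K : Euc n → ℝ) : Prop where
  measurable : Measurable K
  nonneg : ∀ z, z ≠ 0 → 0 ≤ K z
  le : ∀ z, z ≠ 0 → K z ≤ Lam * ‖z‖ ^ (-(n : ℝ) - 2 * s)

lemma IsAdmissibleKernel.isDominatedKernel (hK : IsAdmissibleKernel n s lam Lam K) :
    IsDominatedKernel n s Lam K where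
  measurable := hK.2.2.1
  nonneg z hz := (mul_nonneg hK.1.le (by positivity)).trans (hK.2.2.2.2 z hz).1
  le z hz := (hK.2.2.2.2 z hz).2

lemma IsDominatedKernel.abs_mul_le (hK : IsDominatedKernel n s Lam K) {C R d : ℝ} (hR : 0 < R)
    {z : Euc n} (hd : |d| ≤ C * min 1 (‖R⁻¹ • z‖ ^ 2)) :
    |d * K z| ≤ C * Lam * (R ^ (-(n : ℝ) - 2 * s) * levyWeight s (R⁻¹ • z)) := by
  rcases eq_or_ne z 0 with rfl | hz
  · have hd0 : d = 0 := by simpa using hd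
    simp [hd0, levyWeight_zero]
  · have hweight := min_one_sq_norm_inv_smul_mul_rpow s hR z
    rw [finrank_euclideanSpace_fin] at hweight
    calc |d * K z| = |d| * K z := by rw [abs_mul, abs_of_nonneg (hK.nonneg z hz)]
      _ ≤ C * min 1 (‖R⁻¹ • z‖ ^ 2) * (Lam * ‖z‖ ^ (-(n : ℝ) - 2 * s)) :=
        mul_le_mul hd (hK.le z hz) (hK.nonneg z hz) ((abs_nonneg d).trans hd)
      _ = C * Lam * (R ^ (-(n : ℝ) - 2 * s) * levyWeight s (R⁻¹ • z)) := by
        rw [← hweight]; ring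

lemma IsDominatedKernel.integrable_secondDiff_mul (hK : IsDominatedKernel n s Lam K)
    (hs : s ∈ Ioo (0 : ℝ) 1) (hφ : ContDiff ℝ 2 φ) (hsupp : HasCompactSupport φ) (x : Euc n) :
    Integrable fun z => (2 * φ x - φ (x + z) - φ (x - z)) * K z := by
  obtain ⟨C, hC⟩ := exists_norm_secondDiff_le hφ hsupp
  have hcont : Continuous φ := hφ.continuous
  have hmeas : Measurable fun z => (2 * φ x - φ (x + z) - φ (x - z)) * K z :=
    Measurable.mul (by fun_prop) hK.measurable
  refine ((integrable_levyWeight volume hs).const_mul (C * Lam)).mono' hmeas.aestronglyMeasurable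
    (.of_forall fun z => ?_)
  simpa using hK.abs_mul_le one_pos (by simpa using hC x z)

lemma IsDominatedKernel.exists_abs_LK_comp_smul_le (hK : IsDominatedKernel n s Lam K)
    (hs : s ∈ Ioo (0 : ℝ) 1) (hφ : ContDiff ℝ 2 φ) (hsupp : HasCompactSupport φ) :
    ∃ A, 0 ≤ A ∧ ∀ R, 0 < R → ∀ x, |LK n K (fun y => φ (R⁻¹ • y)) x| ≤ A * R ^ (-(2 * s)) := by
  obtain ⟨C, hC⟩ := exists_norm_secondDiff_le hφ hsupp
  have hbound : ∀ R, 0 < R → ∀ x, |LK n K (fun y => φ (R⁻¹ • y)) x| ≤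
      1 / 2 * (C * Lam * ∫ z : Euc n, levyWeight s z) * R ^ (-(2 * s)) := by
    intro R hR x
    set w : Euc n → ℝ := fun z => R ^ (-(n : ℝ) - 2 * s) * levyWeight s (R⁻¹ • z)
    have hw : Integrable w :=
      ((integrable_levyWeight volume hs).comp_smul (inv_ne_zero hR.ne')).const_mul _
    have hwint : ∫ z, w z = R ^ (-(2 * s)) * ∫ z : Euc n, levyWeight s z := by
      simpa only [finrank_euclideanSpace_fin] using
        integral_rpow_mul_levyWeight_inv_smul (volume : Measure (Euc n)) s hR
    have hpoint : ∀ z, |(2 * φ (R⁻¹ • x) - φ (R⁻¹ • (x + z)) - φ (R⁻¹ • (x - z))) * K z| ≤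
        C * Lam * w z := fun z =>
      hK.abs_mul_le hR <| by
        simpa only [smul_add, smul_sub, smul_eq_mul, Real.norm_eq_abs] using hC (R⁻¹ • x) (R⁻¹ • z)
    have hintegral := norm_integral_le_of_norm_le (hw.const_mul (C * Lam)) <| .of_forall fun z =>
      (Real.norm_eq_abs _).trans_le (hpoint z)
    rw [integral_const_mul, hwint, Real.norm_eq_abs] at hintegral
    rw [LK, abs_mul, abs_of_pos one_half_pos]
    linarith
  exact ⟨_, (abs_nonneg _).trans (by simpa using hbound 1 one_pos 0), hbound⟩

/-- A Córdoba–Córdoba inequality: already the second differences compare, pointwise in `z`. -/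
lemma IsDominatedKernel.LK_comp_le_mul (hK : IsDominatedKernel n s Lam K)
    (hs : s ∈ Ioo (0 : ℝ) 1) {f : ℝ → ℝ} {c : ℝ} {x : Euc n}
    (hφ : ContDiff ℝ 2 φ) (hsupp : HasCompactSupport φ)
    (hfφ : ContDiff ℝ 2 fun y => f (φ y)) (hfsupp : HasCompactSupport fun y => f (φ y))
    (hc : ∀ y, f (φ x) + c * (φ y - φ x) ≤ f (φ y)) :
    LK n K (fun y => f (φ y)) x ≤ c * LK n K φ x := by
  rw [LK, LK, mul_left_comm c, ← integral_const_mul c]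
  gcongr 1 / 2 * ?_
  refine integral_mono (hK.integrable_secondDiff_mul hs hfφ hfsupp x)
    ((hK.integrable_secondDiff_mul hs hφ hsupp x).const_mul c) fun z => ?_
  rcases eq_or_ne z 0 with rfl | hz
  · refine le_of_eq ?_
    simp only [add_zero, sub_zero]
    ring
  · dsimp only
    rw [← mul_assoc]
    gcongr
    · exact hK.nonneg z hz
    · linarith [hc (x + z), hc (x - z)]

lemma IsDominatedKernel.LK_pow_succ_le_mul (hK : IsDominatedKernel n s Lam K)
    (hs : s ∈ Ioo (0 : ℝ) 1) (hφ : ContDiff ℝ 2 φ) (hsupp : HasCompactSupport φ)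
    (hφ0 : ∀ y, 0 ≤ φ y) (m : ℕ) (x : Euc n) :
    LK n K (fun y => φ y ^ (m + 1)) x ≤ (m + 1) * φ x ^ m * LK n K φ x := by
  have hpowsupp : HasCompactSupport fun y => φ y ^ (m + 1) :=
    hsupp.comp_left (g := fun t : ℝ => t ^ (m + 1)) (zero_pow m.succ_ne_zero)
  have htangent : ∀ y, φ x ^ (m + 1) + (m + 1) * φ x ^ m * (φ y - φ x) ≤ φ y ^ (m + 1) :=
    fun y => by
      simpa using pow_add_mul_le_add_pow (b := φ y - φ x) (hφ0 x) (by linarith [hφ0 x, hφ0 y])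
        (m + 1)
  exact hK.LK_comp_le_mul hs (f := fun t => t ^ (m + 1)) hφ hsupp
    (hφ.pow (m + 1)) hpowsupp htangent

lemma IsDominatedKernel.exists_LK_pow_succ_comp_smul_le (hK : IsDominatedKernel n s Lam K)
    (hs : s ∈ Ioo (0 : ℝ) 1) (hφ : ContDiff ℝ 2 φ) (hsupp : HasCompactSupport φ)
    (hφ0 : ∀ y, 0 ≤ φ y) (m : ℕ) :
    ∃ A, 0 ≤ A ∧ ∀ R, 0 < R → ∀ x,
      LK n K (fun y => φ (R⁻¹ • y) ^ (m + 1)) x ≤ A * R ^ (-(2 * s)) * φ (R⁻¹ • x) ^ m := by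
  obtain ⟨A, hA0, hA⟩ := hK.exists_abs_LK_comp_smul_le hs hφ hsupp
  refine ⟨(m + 1) * A, by positivity, fun R hR x => ?_⟩
  have hscaled : ContDiff ℝ 2 fun y => φ (R⁻¹ • y) := hφ.comp (contDiff_const_smul R⁻¹)
  have hscaledsupp : HasCompactSupport fun y => φ (R⁻¹ • y) :=
    hsupp.comp_smul (inv_ne_zero hR.ne')
  have hslope : 0 ≤ (m + 1) * φ (R⁻¹ • x) ^ m :=
    mul_nonneg (by positivity) (pow_nonneg (hφ0 (R⁻¹ • x)) m)
  calc LK n K (fun y => φ (R⁻¹ • y) ^ (m + 1)) x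
      ≤ (m + 1) * φ (R⁻¹ • x) ^ m * LK n K (fun y => φ (R⁻¹ • y)) x :=
        hK.LK_pow_succ_le_mul hs hscaled hscaledsupp (fun y => hφ0 (R⁻¹ • y)) m x
    _ ≤ (m + 1) * φ (R⁻¹ • x) ^ m * (A * R ^ (-(2 * s))) :=
        mul_le_mul_of_nonneg_left ((le_abs_self _).trans (hA R hR x)) hslope
    _ = (m + 1) * A * R ^ (-(2 * s)) * φ (R⁻¹ • x) ^ m := by ring

end Operator

section Absorption

variable {p q a : ℝ} {m : ℕ}

lemma exists_nat_add_one_le_mul (hq : 1 < q) : ∃ m : ℕ, (m : ℝ) + 1 ≤ m * q := by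
  obtain ⟨m, hm⟩ := exists_nat_ge (q - 1)⁻¹
  refine ⟨m, ?_⟩
  rw [inv_le_iff_one_le_mul₀ (sub_pos.2 hq)] at hm
  linarith

lemma ne_zero_of_add_one_le_mul (hm : (m : ℝ) + 1 ≤ m * q) : m ≠ 0 := by
  rintro rfl
  norm_num at hm

lemma mul_mul_pow_le_young (hqp : q.HolderConjugate p) (hm : (m : ℝ) + 1 ≤ m * q) (ha : 0 ≤ a)
    {t e : ℝ} (ht : 0 ≤ t) (he : e ∈ Icc (0 : ℝ) 1) :
    a * (t * e ^ m) ≤ t ^ q * e ^ (m + 1) / q + a ^ p / p := by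
  have hpow : (e ^ m) ^ q ≤ e ^ (m + 1) := by
    rw [← Real.rpow_natCast, ← Real.rpow_natCast, ← Real.rpow_mul he.1]
    exact Real.rpow_le_rpow_of_exponent_ge' he.1 he.2 (by positivity) (by exact_mod_cast hm)
  calc a * (t * e ^ m) = t * e ^ m * a := mul_comm _ _
    _ ≤ (t * e ^ m) ^ q / q + a ^ p / p :=
      Real.young_inequality_of_nonneg (mul_nonneg ht (pow_nonneg he.1 m)) ha hqp
    _ ≤ t ^ q * e ^ (m + 1) / q + a ^ p / p := by
      rw [Real.mul_rpow ht (pow_nonneg he.1 m)]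
      gcongr
      exact hqp.nonneg

lemma integral_rpow_mul_pow_succ_le_of_le_mul {α : Type*} [MeasurableSpace α] {μ : Measure α}
    {u e : α → ℝ} {S : Set α} (hqp : q.HolderConjugate p) (hm : (m : ℝ) + 1 ≤ m * q) (ha : 0 ≤ a)
    (hS : μ S ≠ ⊤) (hu : ∀ x, 0 ≤ u x) (he : ∀ x, e x ∈ Icc (0 : ℝ) 1) (heS : ∀ x ∉ S, e x = 0)
    (hqint : Integrable (fun x => u x ^ q * e x ^ (m + 1)) μ)
    (hint : Integrable (fun x => u x * e x ^ m) μ)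
    (h : ∫ x, u x ^ q * e x ^ (m + 1) ∂μ ≤ a * ∫ x, u x * e x ^ m ∂μ) :
    ∫ x, u x ^ q * e x ^ (m + 1) ∂μ ≤ a ^ p * μ.real S := by
  set I := ∫ x, u x ^ q * e x ^ (m + 1) ∂μ
  have hm0 : m ≠ 0 := ne_zero_of_add_one_le_mul hm
  have hISet : ∫ x in S, u x ^ q * e x ^ (m + 1) ∂μ = I :=
    setIntegral_eq_integral_of_forall_compl_eq_zero fun x hx => by simp [heS x hx]
  have hJSet : ∫ x in S, u x * e x ^ m ∂μ = ∫ x, u x * e x ^ m ∂μ :=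
    setIntegral_eq_integral_of_forall_compl_eq_zero fun x hx => by simp [heS x hx, hm0]
  have hyoung : I ≤ I / q + μ.real S * (a ^ p / p) := by
    calc I ≤ ∫ x in S, a * (u x * e x ^ m) ∂μ := by rwa [integral_const_mul, hJSet]
      _ ≤ ∫ x in S, (u x ^ q * e x ^ (m + 1) / q + a ^ p / p) ∂μ :=
        setIntegral_mono (hint.const_mul a).integrableOn
          ((hqint.div_const q).integrableOn.add (integrableOn_const hS))
          fun x => mul_mul_pow_le_young hqp hm ha (hu x) (he x)
      _ = I / q + μ.real S * (a ^ p / p) := by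
        rw [integral_add (hqint.div_const q).integrableOn (integrableOn_const hS),
          integral_div, hISet, setIntegral_const, smul_eq_mul]
  have habsorb : p⁻¹ * I ≤ p⁻¹ * (a ^ p * μ.real S) := by
    rw [← hqp.one_sub_inv]
    have hp : p⁻¹ = 1 - q⁻¹ := hqp.one_sub_inv.symm
    rw [div_eq_mul_inv, div_eq_mul_inv, hp] at hyoung
    linarith
  exact le_of_mul_le_mul_left habsorb (inv_pos.2 hqp.symm.pos)

end Absorption

/-- If `f` is not integrable, its integral is `0` by convention and the inequality still holds. -/
lemma integral_mono_of_nonneg_right {α : Type*} [MeasurableSpace α] {μ : Measure α} {f g : α → ℝ}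
    (hg : Integrable g μ) (hg0 : 0 ≤ g) (hfg : f ≤ g) : ∫ x, f x ∂μ ≤ ∫ x, g x ∂μ := by
  by_cases hf : Integrable f μ
  · exact integral_mono hf hg hfg
  · exact (integral_undef hf).trans_le (integral_nonneg hg0)

lemma ae_eq_zero_of_tendsto_setIntegral_ball_le {X : Type*} [PseudoMetricSpace X]
    [MeasurableSpace X] {μ : Measure X} {f : X → ℝ} {g : ℝ → ℝ} (x₀ : X) (hf0 : 0 ≤ f)
    (hf : ∀ R, 0 < R → IntegrableOn f (ball x₀ R) μ) (hg : Tendsto g atTop (𝓝 0))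
    (hfg : ∀ R, 0 < R → ∫ x in ball x₀ R, f x ∂μ ≤ g R) : f =ᵐ[μ] 0 := by
  have hball : ∀ r, 0 < r → ∫ x in ball x₀ r, f x ∂μ = 0 := by
    refine fun r hr => le_antisymm (ge_of_tendsto hg ?_) (integral_nonneg hf0)
    filter_upwards [eventually_ge_atTop r] with R hrR
    exact (setIntegral_mono_set (hf R (hr.trans_le hrR)) (.of_forall hf0)
      (ball_subset_ball hrR).eventuallyLE).trans (hfg R (hr.trans_le hrR))
  rw [← Measure.restrict_univ (μ := μ), ← iUnion_ball_nat_succ x₀]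
  refine (ae_restrict_iUnion_iff _ _).2 fun k => ?_
  exact (setIntegral_eq_zero_iff_of_nonneg_ae (.of_forall hf0)
    (hf _ k.cast_add_one_pos)).1 (hball _ k.cast_add_one_pos)

section Cutoff

variable {n : ℕ} {η φ : Euc n → ℝ} {R : ℝ} {x : Euc n}

lemma exists_isCutoff (n : ℕ) : ∃ η, IsCutoff n η := by
  let b : ContDiffBump (0 : Euc n) := ⟨1, 2, one_pos, one_lt_two⟩
  exact ⟨b, b.contDiff, fun x => ⟨b.nonneg, b.le_one⟩,
    fun x hx => b.one_of_mem_closedBall (mem_closedBall_zero_iff.2 hx),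
    fun x hx => b.zero_of_le_dist (by rwa [dist_zero_right])⟩

lemma IsCutoff.hasCompactSupport (hη : IsCutoff n η) : HasCompactSupport η :=
  .intro (isCompact_closedBall 0 2) fun x hx =>
    hη.2.2.2 x (not_le.1 (mt mem_closedBall_zero_iff.2 hx)).le

lemma IsCutoff.inv_smul_eq_one (hη : IsCutoff n η) (hR : 0 < R) (hx : x ∈ ball 0 R) :
    η (R⁻¹ • x) = 1 := by
  refine hη.2.2.1 _ ?_
  rw [norm_smul_of_nonneg (inv_nonneg.2 hR.le), inv_mul_le_one₀ hR]
  exact (mem_ball_zero_iff.1 hx).le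

lemma IsCutoff.inv_smul_eq_zero (hη : IsCutoff n η) (hR : 0 < R) (hx : x ∉ ball 0 (R * 2)) :
    η (R⁻¹ • x) = 0 := by
  refine hη.2.2.2 _ ?_
  rw [norm_smul_of_nonneg (inv_nonneg.2 hR.le), le_inv_mul_iff₀ hR]
  exact not_lt.1 (mt mem_ball_zero_iff.2 hx)

lemma IsCutoff.isTestFun_inv_smul (hη : IsCutoff n η) (hR : 0 < R) :
    IsTestFun n fun y => η (R⁻¹ • y) :=
  ⟨hη.1.comp (contDiff_const_smul R⁻¹), hη.hasCompactSupport.comp_smul (inv_ne_zero hR.ne')⟩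

lemma IsTestFun.pow (hφ : IsTestFun n φ) {k : ℕ} (hk : k ≠ 0) : IsTestFun n fun y => φ y ^ k :=
  ⟨hφ.1.pow k, hφ.2.comp_left (g := fun t : ℝ => t ^ k) (zero_pow hk)⟩

lemma IsTestFun.integrable_mul (hφ : IsTestFun n φ) {f : Euc n → ℝ} (hf : LocallyIntegrable f) :
    Integrable fun y => f y * φ y := by
  simpa only [smul_eq_mul, mul_comm] using
    hf.integrable_smul_left_of_hasCompactSupport hφ.1.continuous hφ.2

lemma MemLqLoc.locallyIntegrable {q : ℝ} {u : Euc n → ℝ} (hu : MemLqLoc n q u) :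
    LocallyIntegrable fun y => u y ^ q := fun y =>
  ⟨ball 0 (‖y‖ + 1), isOpen_ball.mem_nhds (mem_ball_zero_iff.2 (lt_add_one _)),
    hu _ (by positivity)⟩

end Cutoff

section Supersolution

variable {n : ℕ} {s p q Lam : ℝ} {K u : Euc n → ℝ}

lemma IsWeakSupersol.integral_rpow_mul_pow_succ_le (hu : IsWeakSupersol n s q K u)
    (hqp : q.HolderConjugate p) {m : ℕ} (hm : (m : ℝ) + 1 ≤ m * q) {a : ℝ} (ha : 0 ≤ a)
    {e : Euc n → ℝ} {S : Set (Euc n)} (hS : volume S ≠ ⊤) (he : IsTestFun n e)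
    (he01 : ∀ x, e x ∈ Icc (0 : ℝ) 1) (heS : ∀ x ∉ S, e x = 0)
    (hLK : ∀ x, LK n K (fun y => e y ^ (m + 1)) x ≤ a * e x ^ m) :
    ∫ x, u x ^ q * e x ^ (m + 1) ≤ a ^ p * volume.real S := by
  obtain ⟨-, hu0, huq, ⟨huloc, -⟩, htest⟩ := hu
  have hpow0 : ∀ k x, 0 ≤ e x ^ k := fun k x => pow_nonneg (he01 x).1 k
  have hqint : Integrable fun x => u x ^ q * e x ^ (m + 1) :=
    (he.pow m.succ_ne_zero).integrable_mul huq.locallyIntegrable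
  have hint : Integrable fun x => u x * e x ^ m :=
    (he.pow (ne_zero_of_add_one_le_mul hm)).integrable_mul huloc
  refine integral_rpow_mul_pow_succ_le_of_le_mul hqp hm ha hS hu0 he01 heS hqint hint ?_
  calc ∫ x, u x ^ q * e x ^ (m + 1) ≤ ∫ x, u x * LK n K (fun y => e y ^ (m + 1)) x :=
        htest _ (he.pow m.succ_ne_zero) (hpow0 _)
    _ ≤ ∫ x, a * (u x * e x ^ m) :=
        integral_mono_of_nonneg_right (hint.const_mul a)
          (fun x => mul_nonneg ha (mul_nonneg (hu0 x) (hpow0 m x))) fun x =>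
            (mul_le_mul_of_nonneg_left (hLK x) (hu0 x)).trans_eq (mul_left_comm _ _ _)
    _ = a * ∫ x, u x * e x ^ m := integral_const_mul a _

lemma IsWeakSupersol.exists_setIntegral_rpow_ball_le (hu : IsWeakSupersol n s q K u)
    (hK : IsDominatedKernel n s Lam K) (hs : s ∈ Ioo (0 : ℝ) 1) (hqp : q.HolderConjugate p) :
    ∃ C, ∀ R, 0 < R → ∫ x in ball 0 R, u x ^ q ≤ C * R ^ ((n : ℝ) - 2 * s * p) := by
  obtain ⟨η, hη⟩ := exists_isCutoff n
  obtain ⟨m, hm⟩ := exists_nat_add_one_le_mul hqp.lt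
  obtain ⟨A, hA0, hA⟩ := hK.exists_LK_pow_succ_comp_smul_le hs (hη.1.of_le (by norm_cast))
    hη.hasCompactSupport (fun y => (hη.2.1 y).1) m
  refine ⟨A ^ p * volume.real (ball (0 : Euc n) 2), fun R hR => ?_⟩
  set e : Euc n → ℝ := fun x => η (R⁻¹ • x)
  have he : IsTestFun n e := hη.isTestFun_inv_smul hR
  have hint : Integrable fun x => u x ^ q * e x ^ (m + 1) :=
    (he.pow m.succ_ne_zero).integrable_mul hu.2.2.1.locallyIntegrable
  have hvol : volume.real (ball (0 : Euc n) (R * 2)) =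
      R ^ n * volume.real (ball (0 : Euc n) 2) := by
    rw [measureReal_def, Measure.addHaar_ball_mul_of_pos volume 0 hR, ENNReal.toReal_mul,
      ENNReal.toReal_ofReal (by positivity), finrank_euclideanSpace_fin, measureReal_def]
  calc ∫ x in ball 0 R, u x ^ q = ∫ x in ball 0 R, u x ^ q * e x ^ (m + 1) :=
        setIntegral_congr_fun measurableSet_ball fun x hx => by
          simp [e, hη.inv_smul_eq_one hR hx]
    _ ≤ ∫ x, u x ^ q * e x ^ (m + 1) :=
        setIntegral_le_integral hint <| .of_forall fun x =>
          mul_nonneg (Real.rpow_nonneg (hu.2.1 x) q) (pow_nonneg (hη.2.1 _).1 _)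
    _ ≤ (A * R ^ (-(2 * s))) ^ p * volume.real (ball (0 : Euc n) (R * 2)) :=
        hu.integral_rpow_mul_pow_succ_le hqp hm (by positivity) measure_ball_lt_top.ne he
          (fun x => hη.2.1 _) (fun x hx => hη.inv_smul_eq_zero hR hx) (hA R hR)
    _ = A ^ p * volume.real (ball (0 : Euc n) 2) * R ^ ((n : ℝ) - 2 * s * p) := by
        rw [hvol, Real.mul_rpow hA0 (by positivity), ← Real.rpow_mul hR.le, sub_eq_neg_add,
          Real.rpow_add hR, Real.rpow_natCast, neg_mul]
        ring

end Supersolution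

theorem liouville_low_dimension_general {n : ℕ} {s Lam q : ℝ} {K u : Euc n → ℝ}
    (hs : s ∈ Ioo (0 : ℝ) 1) (hK : IsDominatedKernel n s Lam K)
    (hq : 1 < q) (hqn : ((n : ℝ) - 2 * s) * q < n) (hu : IsWeakSupersol n s q K u) :
    ∀ᵐ x : Euc n, u x = 0 := by
  have hqp : q.HolderConjugate q.conjExponent := .conjExponent hq
  obtain ⟨C, hC⟩ := hu.exists_setIntegral_rpow_ball_le hK hs hqp
  have hexp : 0 < 2 * s * q.conjExponent - n := by
    rw [Real.conjExponent, ← mul_div_assoc, sub_pos, lt_div_iff₀ (sub_pos.2 hq)]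
    linarith
  have hlim : Tendsto (fun R : ℝ => C * R ^ ((n : ℝ) - 2 * s * q.conjExponent)) atTop (𝓝 0) := by
    simpa using (tendsto_rpow_neg_atTop hexp).const_mul C
  obtain ⟨-, hu0, huq, -, -⟩ := hu
  filter_upwards [ae_eq_zero_of_tendsto_setIntegral_ball_le 0 (fun x => Real.rpow_nonneg (hu0 x) q)
    huq hlim hC] with x hx
  exact ((Real.rpow_eq_zero_iff_of_nonneg (hu0 x)).1 hx).1

/-- Liouville theorem in the low dimensional case `n ≤ 2s`, for every `q > 1`. -/
theorem liouville_low_dimension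
    (n : ℕ) (hn : 1 ≤ n) (s : ℝ) (hs : s ∈ Set.Ioo (0 : ℝ) 1)
    (hns : (n : ℝ) ≤ 2 * s)
    (lam Lam : ℝ) (K : Euc n → ℝ) (hK : IsAdmissibleKernel n s lam Lam K)
    (q : ℝ) (hq : 1 < q)
    (u : Euc n → ℝ) (hu : IsWeakSupersol n s q K u) :
    ∀ᵐ x : Euc n, u x = 0 := by
  have hqn : ((n : ℝ) - 2 * s) * q < n :=
    (mul_nonpos_of_nonpos_of_nonneg (by linarith) (by linarith)).trans_lt (by exact_mod_cast hn)
  exact liouville_low_dimension_general hs hK.isDominatedKernel hq hqn hu
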